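/- For every d ∈ ℕ there is a constant C_d > 0 such that: if α ∈ (0,1/2], ρ ∈ (0,1], and μ is a mean (α,ρ)-porous Borel probability measure on ℝ^d, then the upper packing dimension of μ satisfies udim_P(μ) ≤ d − C_d·ρ·α^d. -/

import Mathlib

open MeasureTheory Filter Metric Set
open scoped Classical

/-- `por(μ,x,r,ε)`: the supremum of `α ≥ 0` such that some ball `B(y,αr) ⊆ B(x,r)` has
`μ(B(y,αr)) ≤ ε·μ(B(x,r))` (an "ε-hole" of relative size `α`). -/
noncomputable def porMeas {X : Type*} [MetricSpace X] [MeasurableSpace X]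
    (μ : Measure X) (x : X) (r ε : ℝ) : ℝ :=
  sSup {α : ℝ | 0 ≤ α ∧ ∃ y, Metric.ball y (α * r) ⊆ Metric.ball x r ∧
    μ (Metric.ball y (α * r)) ≤ ENNReal.ofReal ε * μ (Metric.ball x r)}

/-- `μ` is mean `(α,ρ)`-porous: for every `ε > 0`, at `μ`-a.e. point the lower asymptotic
proportion of scales `i` with `por(μ,x,2^{-i},ε) > α` is at least `ρ`. -/
def IsMeanPorous {X : Type*} [MetricSpace X] [MeasurableSpace X]
    (μ : Measure X) (α ρ : ℝ) : Prop :=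
  ∀ ε : ℝ, 0 < ε → ∀ᵐ x ∂μ,
    ρ ≤ Filter.liminf (fun n : ℕ =>
      (((Finset.range n).filter fun i => α < porMeas μ x ((2 : ℝ) ^ (-(i : ℤ))) ε).card : ℝ) / n)
      atTop

/-- The upper local dimension of a measure at a point. -/
noncomputable def upperLocalDim {X : Type*} [MetricSpace X] [MeasurableSpace X]
    (μ : Measure X) (x : X) : EReal :=
  Filter.limsup (fun r : ℝ =>
    ((Real.log (μ (Metric.ball x r)).toReal / Real.log r : ℝ) : EReal))
    (nhdsWithin 0 (Set.Ioi 0))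

/-- The upper packing dimension of a measure: the `μ`-essential supremum of the upper
local dimensions. -/
noncomputable def upperPackingDim {X : Type*} [MetricSpace X] [MeasurableSpace X]
    (μ : Measure X) : EReal :=
  essSup (upperLocalDim μ) μ

/-
Fix `m` with `2 ^ m ≥ 8 d / α` and cut `ℝ^d` into dyadic cubes; call a cube a hole if its mass is at
most `ε` times that of its `m`-th ancestor. Give every cube the weight that is halved each time a
hole is entered and multiplied by `1 + 2 ^ (-d m) / 4` each time a hole lies `m` generations below.
Since such a hole occupies the fraction `2 ^ (-d m)` of the descendants, the loss there pays for the
earlier gain: corrected by a discounted count of the holes to come, the weight becomes a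
supermartingale for the uniform splitting of cubes. By Borel–Cantelli, almost every point
therefore has its `n`-th cube of mass at least about `2 ^ (-d n)` times its weight, up to
subexponential factors. Entering a hole multiplies the mass by at most `ε`, so for small `ε` the
halvings are negligible, and the weight grows by a factor `1 + 2 ^ (-d m) / 4` per cube seeing a
hole.

The hole seen from a point may lie outside the dyadic cube of that point. Hence one uses the `2 ^ d`
grids obtained by moving some of the coordinates by `1 / 3`: at every point and scale, the cube of
one of them contains a ball of comparable radius around the point. Averaging the mass estimates over
the grids leaves a gain of order `2 ^ (-d m) ≈ α ^ d` for every porous scale.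
-/

namespace MeanPorosity

open scoped Topology

section Tree

variable {ι : Type*} (p : ι → ι) (H : ℕ → Set ι)

/-- Think of `ι` as the vertices of every level of a forest with parent map `p`, and of `H ℓ` as a
set of vertices of level `ℓ`, the holes. `holeBelow p H k n` is the indicator function of the
vertices of level `n` having a hole among their descendants `k` generations later. -/
noncomputable def holeBelow (k n : ℕ) : ι → ℝ := (p^[k] '' H (n + k)).indicator 1

lemma holeBelow_eq_zero_or_one (k n : ℕ) (b : ι) :
    holeBelow p H k n b = 0 ∨ holeBelow p H k n b = 1 :=
  indicator_eq_zero_or_self _ _ _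

lemma holeBelow_nonneg (k n : ℕ) (b : ι) : 0 ≤ holeBelow p H k n b := by
  rcases holeBelow_eq_zero_or_one p H k n b with h | h <;> simp [h]

lemma holeBelow_le_one (k n : ℕ) (b : ι) : holeBelow p H k n b ≤ 1 := by
  rcases holeBelow_eq_zero_or_one p H k n b with h | h <;> simp [h]

lemma holeBelow_succ_le_sum {p} {children : ι → Finset ι}
    (mem_children : ∀ a b, b ∈ children a ↔ p b = a) (k n : ℕ) (a : ι) :
    holeBelow p H (k + 1) n a ≤ ∑ b ∈ children a, holeBelow p H k (n + 1) b := by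
  refine indicator_apply_le' ?_ fun _ => Finset.sum_nonneg fun b _ => holeBelow_nonneg p H k _ b
  rintro ⟨r, hr, rfl⟩
  rw [show n + (k + 1) = n + 1 + k by omega] at hr
  calc (1 : ℝ) = holeBelow p H k (n + 1) (p^[k] r) :=
        (indicator_of_mem (mem_image_of_mem p^[k] hr) 1).symm
    _ ≤ _ := Finset.single_le_sum (fun b _ => holeBelow_nonneg p H k (n + 1) b)
        ((mem_children _ _).2 (Function.iterate_succ_apply' p k r).symm)

variable (N : ℝ) (m : ℕ)

/-- The discounted number of generations, among the next `m`, in which `b` (of level `n`) has a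
hole: a hole `k` generations below `b` is discounted by the factor `N ^ (-k)`, where `N` is the
number of children of a vertex. -/
noncomputable def pendingHoles (n : ℕ) (b : ι) : ℝ :=
  ∑ k ∈ Finset.range m, N⁻¹ ^ (k + 1) * holeBelow p H (k + 1) n b

/-- The factor by which the weight of a vertex exceeds that of its parent: it pays `1 / 2` when the
vertex is a hole, and earns `1 + N ^ (-m) / 4` when there is a hole `m` generations below. -/
noncomputable def weightFactor (n : ℕ) (b : ι) : ℝ :=
  (1 + N⁻¹ ^ m / 4 * holeBelow p H m n b) * (1 - holeBelow p H 0 n b / 2)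

/-- The product of the factors `weightFactor` along the path from level `0` to a vertex. -/
noncomputable def weight : ℕ → ι → ℝ
  | 0, _ => 1
  | n + 1, b => weight n (p b) * weightFactor p H N m (n + 1) b

/-- The weight, corrected by the holes which are still to come below the vertex, so that its average
over the children of a vertex is at most its value at that vertex. -/
noncomputable def potential (n : ℕ) (b : ι) : ℝ :=
  weight p H N m n b * (1 - pendingHoles p H N m n b / 4)

lemma sum_pow_succ_le_one {q : ℝ} (hq : 0 ≤ q) (hq' : q ≤ 1 / 2) (n : ℕ) :
    ∑ k ∈ Finset.range n, q ^ (k + 1) ≤ 1 := by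
  suffices ∑ k ∈ Finset.range n, q ^ (k + 1) ≤ 1 - q ^ n from
    this.trans (sub_le_self _ (pow_nonneg hq n))
  induction n with
  | zero => simp
  | succ n ih =>
    rw [Finset.sum_range_succ, pow_succ]
    nlinarith [pow_nonneg hq n]

variable {N}

lemma pendingHoles_nonneg (hN : 0 ≤ N) (n : ℕ) (b : ι) : 0 ≤ pendingHoles p H N m n b :=
  Finset.sum_nonneg fun _ _ => mul_nonneg (by positivity) (holeBelow_nonneg ..)

lemma pendingHoles_le_one (hN : 2 ≤ N) (n : ℕ) (b : ι) : pendingHoles p H N m n b ≤ 1 :=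
  calc pendingHoles p H N m n b ≤ ∑ k ∈ Finset.range m, N⁻¹ ^ (k + 1) :=
        Finset.sum_le_sum fun _ _ => mul_le_of_le_one_right (by positivity) (holeBelow_le_one ..)
    _ ≤ 1 := sum_pow_succ_le_one (by positivity)
        (by rw [one_div]; exact inv_anti₀ two_pos hN) m

lemma sum_pow_mul_holeBelow (n : ℕ) (b : ι) :
    ∑ k ∈ Finset.range m, N⁻¹ ^ k * holeBelow p H k n b =
      pendingHoles p H N m n b + holeBelow p H 0 n b - N⁻¹ ^ m * holeBelow p H m n b := by
  have h := (Finset.sum_range_succ (fun k => N⁻¹ ^ k * holeBelow p H k n b) m).symm.trans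
    (Finset.sum_range_succ' _ m)
  rw [pow_zero, one_mul] at h
  exact eq_sub_of_add_eq h

lemma weightFactor_pos (hN : 0 ≤ N) (n : ℕ) (b : ι) : 0 < weightFactor p H N m n b := by
  have h₀ := holeBelow_le_one p H 0 n b
  have hₘ := holeBelow_nonneg p H m n b
  exact mul_pos (by positivity) (by linarith)

lemma weight_pos (hN : 0 ≤ N) (n : ℕ) (b : ι) : 0 < weight p H N m n b := by
  induction n generalizing b with
  | zero => exact one_pos
  | succ n ih => exact mul_pos (ih _) (weightFactor_pos p H m hN _ b)

lemma three_quarters_mul_weight_le_potential (hN : 2 ≤ N) (n : ℕ) (b : ι) :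
    3 / 4 * weight p H N m n b ≤ potential p H N m n b := by
  rw [potential, mul_comm]
  gcongr
  · exact (weight_pos p H m (by linarith) n b).le
  · linarith [pendingHoles_le_one p H m hN n b]

lemma potential_nonneg (hN : 2 ≤ N) (n : ℕ) (b : ι) : 0 ≤ potential p H N m n b :=
  (mul_nonneg (by norm_num) (weight_pos p H m (by linarith) n b).le).trans
    (three_quarters_mul_weight_le_potential p H m hN n b)

lemma weightFactor_mul_le (hN : 2 ≤ N) (n : ℕ) (b : ι) :
    weightFactor p H N m n b * (1 - pendingHoles p H N m n b / 4) ≤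
      1 - (∑ k ∈ Finset.range m, N⁻¹ ^ k * holeBelow p H k n b) / 4 := by
  have hx₀ := pendingHoles_nonneg p H m (by linarith : 0 ≤ N) n b
  have hx₁ := pendingHoles_le_one p H m hN n b
  have hκ : 0 ≤ N⁻¹ ^ m * holeBelow p H m n b :=
    mul_nonneg (by positivity) (holeBelow_nonneg ..)
  rw [sum_pow_mul_holeBelow, weightFactor]
  rcases holeBelow_eq_zero_or_one p H 0 n b with h | h <;> rw [h] <;>
    nlinarith [mul_nonneg hκ hx₀]

lemma sum_children_potential_le {children : ι → Finset ι}
    (mem_children : ∀ a b, b ∈ children a ↔ p b = a)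
    (card_children : ∀ a, ((children a).card : ℝ) = N) (hN : 2 ≤ N) (n : ℕ) (a : ι) :
    ∑ b ∈ children a, potential p H N m (n + 1) b ≤ N * potential p H N m n a := by
  have hw := (weight_pos p H m (by linarith : 0 ≤ N) n a).le
  have hN₀ : N ≠ 0 := by positivity
  calc ∑ b ∈ children a, potential p H N m (n + 1) b
      ≤ ∑ b ∈ children a, weight p H N m n a *
          (1 - (∑ k ∈ Finset.range m, N⁻¹ ^ k * holeBelow p H k (n + 1) b) / 4) := by
        refine Finset.sum_le_sum fun b hb => ?_
        rw [potential, weight, (mem_children a b).1 hb, mul_assoc]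
        exact mul_le_mul_of_nonneg_left (weightFactor_mul_le p H m hN (n + 1) b) hw
    _ = weight p H N m n a * (N - (∑ k ∈ Finset.range m, N⁻¹ ^ k *
          ∑ b ∈ children a, holeBelow p H k (n + 1) b) / 4) := by
        rw [← Finset.mul_sum, Finset.sum_sub_distrib, ← Finset.sum_div, Finset.sum_comm]
        simp [card_children, Finset.mul_sum]
    _ ≤ weight p H N m n a * (N - (∑ k ∈ Finset.range m, N⁻¹ ^ k *
          holeBelow p H (k + 1) n a) / 4) := by
        gcongr with k
        exact holeBelow_succ_le_sum H mem_children k n a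
    _ = N * potential p H N m n a := by
        have hsum : ∑ k ∈ Finset.range m, N⁻¹ ^ k * holeBelow p H (k + 1) n a =
            N * pendingHoles p H N m n a := by
          rw [pendingHoles, Finset.mul_sum]
          exact Finset.sum_congr rfl fun k _ => by rw [pow_succ]; field_simp
        rw [hsum, potential]
        ring

/-- The descendants of a vertex after `n` generations. -/
noncomputable def descendants (children : ι → Finset ι) : ℕ → ι → Finset ι
  | 0, a => {a}
  | n + 1, a => (descendants children n a).biUnion children

variable {p} in
lemma mem_descendants {children : ι → Finset ι}
    (mem_children : ∀ a b, b ∈ children a ↔ p b = a) {n : ℕ} {a b : ι} :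
    b ∈ descendants children n a ↔ p^[n] b = a := by
  induction n generalizing b with
  | zero => simp [descendants]
  | succ n ih => simp [descendants, mem_children, ih]

lemma sum_descendants_potential_le {children : ι → Finset ι}
    (mem_children : ∀ a b, b ∈ children a ↔ p b = a)
    (card_children : ∀ a, ((children a).card : ℝ) = N) (hN : 2 ≤ N) (n : ℕ) (a : ι) :
    ∑ b ∈ descendants children n a, potential p H N m n b ≤ N ^ n := by
  induction n with
  | zero =>
    have := pendingHoles_nonneg p H m (by linarith : 0 ≤ N) 0 a
    simpa [descendants, potential, weight] using div_nonneg this zero_le_four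
  | succ n ih =>
    have hdisj : (descendants children n a : Set ι).PairwiseDisjoint children :=
      fun a _ a' _ hne => Finset.disjoint_left.2 fun b hb hb' =>
        hne (((mem_children a b).1 hb).symm.trans ((mem_children a' b).1 hb'))
    calc ∑ b ∈ descendants children (n + 1) a, potential p H N m (n + 1) b
        = ∑ b ∈ descendants children n a, ∑ b' ∈ children b, potential p H N m (n + 1) b' :=
          Finset.sum_biUnion hdisj
      _ ≤ ∑ b ∈ descendants children n a, N * potential p H N m n b :=
          Finset.sum_le_sum fun b _ =>
            sum_children_potential_le p H m mem_children card_children hN n b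
      _ ≤ N ^ (n + 1) := by
          rw [← Finset.mul_sum, pow_succ']
          gcongr

lemma le_log_weightFactor (hN : 1 ≤ N) (n : ℕ) (b : ι) :
    N⁻¹ ^ m / 8 * holeBelow p H m n b - Real.log 2 * holeBelow p H 0 n b ≤
      Real.log (weightFactor p H N m n b) := by
  have hκ₀ : 0 ≤ N⁻¹ ^ m := by positivity
  have hκ₁ : N⁻¹ ^ m ≤ 1 := pow_le_one₀ (by positivity) (inv_le_one_of_one_le₀ hN)
  have gain : N⁻¹ ^ m / 8 * holeBelow p H m n b ≤
      Real.log (1 + N⁻¹ ^ m / 4 * holeBelow p H m n b) := by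
    rcases holeBelow_eq_zero_or_one p H m n b with h | h <;> rw [h]
    · simp
    · refine le_trans ?_ (Real.le_log_one_add_of_nonneg (by positivity))
      rw [le_div_iff₀ (by positivity)]
      nlinarith
  have loss : -(Real.log 2 * holeBelow p H 0 n b) ≤ Real.log (1 - holeBelow p H 0 n b / 2) := by
    rcases holeBelow_eq_zero_or_one p H 0 n b with h | h <;> rw [h]
    · simp
    · rw [show (1 : ℝ) - 1 / 2 = 2⁻¹ by norm_num, Real.log_inv, mul_one]
  have hₘ := holeBelow_nonneg p H m n b
  have h₀ := holeBelow_le_one p H 0 n b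
  rw [weightFactor, Real.log_mul (by positivity) (by linarith)]
  linarith

variable {p} in
lemma le_log_weight (hN : 1 ≤ N) {v : ℕ → ι} (hv : ∀ n, p (v (n + 1)) = v n) (n : ℕ) :
    N⁻¹ ^ m / 8 * ∑ i ∈ Finset.range n, holeBelow p H m (i + 1) (v (i + 1)) -
      Real.log 2 * ∑ i ∈ Finset.range n, holeBelow p H 0 (i + 1) (v (i + 1)) ≤
        Real.log (weight p H N m n (v n)) := by
  induction n with
  | zero => simp [weight]
  | succ n ih =>
    have hN₀ : 0 ≤ N := by linarith
    rw [weight, hv, Real.log_mul (weight_pos p H m hN₀ n _).ne'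
      (weightFactor_pos p H m hN₀ _ _).ne', Finset.sum_range_succ, Finset.sum_range_succ]
    linarith [le_log_weightFactor p H m hN (n + 1) (v (n + 1))]

end Tree

lemma sum_sub_truncated_le_of_monotone {g : ℕ → ℝ} (hg : Monotone g) (m n : ℕ) :
    ∑ i ∈ Finset.range n, (g (i + 1) - g (i + 1 - m)) ≤ m * (g n - g 0) := by
  induction m with
  | zero => simp
  | succ m ih =>
    have telescope : ∑ i ∈ Finset.range n, (g (i + 1 - m) - g (i - m)) = g (n - m) - g 0 := by
      rw [Finset.sum_range_sub fun i => g (i - m), Nat.zero_sub]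
    calc ∑ i ∈ Finset.range n, (g (i + 1) - g (i + 1 - (m + 1)))
        = ∑ i ∈ Finset.range n, (g (i + 1) - g (i + 1 - m)) + (g (n - m) - g 0) := by
          rw [← telescope, ← Finset.sum_add_distrib]
          exact Finset.sum_congr rfl fun i _ => by rw [Nat.add_sub_add_right]; ring
      _ ≤ m * (g n - g 0) + (g n - g 0) := by
          gcongr
          exact hg (Nat.sub_le n m)
      _ = _ := by push_cast; ring

section Cells

variable {X ι : Type*} {c : ℕ → X → ι} {p : ι → ι}

lemma iterate_parent_label (hc : ∀ n x, p (c (n + 1) x) = c n x) (n k : ℕ) (x : X) :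
    p^[k] (c (n + k) x) = c n x := by
  induction k with
  | zero => rfl
  | succ k ih => rw [Function.iterate_succ_apply, ← add_assoc, hc, ih]

lemma antitone_cell (hc : ∀ n x, p (c (n + 1) x) = c n x) (x : X) :
    Antitone fun n => c n ⁻¹' {c n x} :=
  antitone_nat_of_succ_le fun n y (hy : c (n + 1) y = c (n + 1) x) =>
    show c n y = c n x by rw [← hc, hy, hc]

variable [MeasurableSpace X] {μ : Measure X}

/-- The mass of a cell of the `n`-th partition of a sequence of partitions, `c n x` being the label
of the cell of the `n`-th partition that contains `x`. -/
noncomputable def cellMass (μ : Measure X) (c : ℕ → X → ι) (n : ℕ) (b : ι) : ℝ :=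
  μ.real (c n ⁻¹' {b})

/-- The holes at scale `ε` and depth `m`: the cells whose mass is at most `ε` times the mass of the
cell containing them `m` levels above. -/
def sparseCells (μ : Measure X) (c : ℕ → X → ι) (p : ι → ι) (ε : ℝ) (m ℓ : ℕ) : Set ι :=
  {r | m ≤ ℓ ∧ cellMass μ c ℓ r ≤ ε * cellMass μ c (ℓ - m) (p^[m] r)}

lemma antitone_cellMass (hc : ∀ n x, p (c (n + 1) x) = c n x)
    (hfin : ∀ n b, μ (c n ⁻¹' {b}) ≠ ⊤) (x : X) : Antitone fun n => cellMass μ c n (c n x) :=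
  fun _ _ hij => measureReal_mono (antitone_cell hc x hij) (hfin _ _)

lemma ae_cellMass_pos [Countable ι] (hfin : ∀ n b, μ (c n ⁻¹' {b}) ≠ ⊤) :
    ∀ᵐ x ∂μ, ∀ n, 0 < cellMass μ c n (c n x) := by
  have hnull : ∀ n b, ∀ᵐ x ∂μ, c n x = b → μ (c n ⁻¹' {b}) ≠ 0 := fun n b => by
    by_cases h : μ (c n ⁻¹' {b}) = 0
    · filter_upwards [measure_eq_zero_iff_ae_notMem.1 h] with x hx using fun hxb => absurd hxb hx
    · exact Eventually.of_forall fun _ _ => h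
  filter_upwards [ae_all_iff.2 fun n => ae_all_iff.2 (hnull n)] with x hx n
  exact ENNReal.toReal_pos (hx n _ rfl) (hfin n _)

lemma ae_eventually_le_cellMass [Countable ι] (hc : ∀ n x, p (c (n + 1) x) = c n x)
    (hfin : ∀ n b, μ (c n ⁻¹' {b}) ≠ ⊤) {children : ι → Finset ι}
    (mem_children : ∀ a b, b ∈ children a ↔ p b = a) {w : ℕ → ι → ℝ} (hw : ∀ n b, 0 ≤ w n b)
    (hsum : ∀ a, Summable fun n => ∑ b ∈ descendants children n a, w n b) :
    ∀ᵐ x ∂μ, ∀ᶠ n in atTop, w n (c n x) ≤ cellMass μ c n (c n x) := by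
  have borel_cantelli : ∀ a, ∀ᵐ x ∂μ, ∀ᶠ n in atTop,
      ¬(c 0 x = a ∧ cellMass μ c n (c n x) < w n (c n x)) := fun a => by
    refine ae_eventually_notMem
      (s := fun n => {x | c 0 x = a ∧ cellMass μ c n (c n x) < w n (c n x)})
      (ne_top_of_le_ne_top (hsum a).tsum_ofReal_ne_top (ENNReal.tsum_le_tsum fun n => ?_))
    set light := (descendants children n a).filter fun b => cellMass μ c n b < w n b
    have hcover : {x | c 0 x = a ∧ cellMass μ c n (c n x) < w n (c n x)} ⊆
        ⋃ b ∈ light, c n ⁻¹' {b} := by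
      rintro x ⟨rfl, hx⟩
      refine mem_iUnion₂.2 ⟨c n x, Finset.mem_filter.2 ⟨?_, hx⟩, rfl⟩
      rw [mem_descendants mem_children]
      simpa using iterate_parent_label hc 0 n x
    calc μ {x | c 0 x = a ∧ cellMass μ c n (c n x) < w n (c n x)}
        ≤ ∑ b ∈ light, μ (c n ⁻¹' {b}) :=
          (measure_mono hcover).trans (measure_biUnion_finset_le _ _)
      _ ≤ ∑ b ∈ light, ENNReal.ofReal (w n b) := by
          refine Finset.sum_le_sum fun b hb => ?_
          rw [← ofReal_measureReal (hfin n b)]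
          exact ENNReal.ofReal_le_ofReal (Finset.mem_filter.1 hb).2.le
      _ ≤ ∑ b ∈ descendants children n a, ENNReal.ofReal (w n b) :=
          Finset.sum_le_sum_of_subset (Finset.filter_subset _ _)
      _ = ENNReal.ofReal (∑ b ∈ descendants children n a, w n b) :=
          (ENNReal.ofReal_sum_of_nonneg fun b _ => hw n b).symm
  filter_upwards [ae_all_iff.2 borel_cantelli] with x hx
  filter_upwards [hx (c 0 x)] with n hn using not_lt.1 fun h => hn ⟨rfl, h⟩

lemma holeBelow_sparseCells_zero_mul_le (hc : ∀ n x, p (c (n + 1) x) = c n x)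
    (hfin : ∀ n b, μ (c n ⁻¹' {b}) ≠ ⊤) {ε : ℝ} (hε : 0 < ε) (m n : ℕ) {x : X}
    (hx : ∀ n, 0 < cellMass μ c n (c n x)) :
    holeBelow p (sparseCells μ c p ε m) 0 n (c n x) * Real.log ε⁻¹ ≤
      -Real.log (cellMass μ c n (c n x)) - -Real.log (cellMass μ c (n - m) (c (n - m) x)) := by
  have hmono := Real.log_le_log (hx n) (antitone_cellMass hc hfin x (Nat.sub_le n m))
  simp only [holeBelow, Function.iterate_zero, image_id, add_zero, indicator_apply, Pi.one_apply,
    ite_mul, one_mul, zero_mul]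
  split_ifs with hmem
  swap
  · linarith
  obtain ⟨hmn, hsparse⟩ := hmem
  have hanc : p^[m] (c n x) = c (n - m) x := by
    conv_lhs => rw [← Nat.sub_add_cancel hmn]
    exact iterate_parent_label hc (n - m) m x
  rw [hanc] at hsparse
  have := Real.log_le_log (hx n) hsparse
  rw [Real.log_mul hε.ne' (hx _).ne'] at this
  rw [Real.log_inv]
  linarith

lemma log_two_mul_sum_holeBelow_zero_le (hc : ∀ n x, p (c (n + 1) x) = c n x)
    (hfin : ∀ n b, μ (c n ⁻¹' {b}) ≠ ⊤) {ε θ : ℝ} (hε : ε ∈ Ioo 0 1) {m : ℕ}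
    (hθ : m * Real.log 2 ≤ θ * Real.log ε⁻¹) {x : X} (hx : ∀ n, 0 < cellMass μ c n (c n x))
    (n : ℕ) :
    Real.log 2 * ∑ i ∈ Finset.range n,
        holeBelow p (sparseCells μ c p ε m) 0 (i + 1) (c (i + 1) x) ≤
      θ * (Real.log (cellMass μ c 0 (c 0 x)) - Real.log (cellMass μ c n (c n x))) := by
  set g : ℕ → ℝ := fun n => -Real.log (cellMass μ c n (c n x))
  set D := ∑ i ∈ Finset.range n, holeBelow p (sparseCells μ c p ε m) 0 (i + 1) (c (i + 1) x)
  have hg : Monotone g := fun i j hij =>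
    neg_le_neg (Real.log_le_log (hx j) (antitone_cellMass hc hfin x hij))
  have hlog : 0 < Real.log ε⁻¹ := Real.log_pos ((one_lt_inv₀ hε.1).2 hε.2)
  have drops : D * Real.log ε⁻¹ ≤ m * (g n - g 0) :=
    calc D * Real.log ε⁻¹ ≤ ∑ i ∈ Finset.range n, (g (i + 1) - g (i + 1 - m)) := by
          rw [Finset.sum_mul]
          exact Finset.sum_le_sum fun i _ =>
            holeBelow_sparseCells_zero_mul_le hc hfin hε.1 m (i + 1) hx
      _ ≤ m * (g n - g 0) := sum_sub_truncated_le_of_monotone hg m n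
  have hgn : g n - g 0 =
      Real.log (cellMass μ c 0 (c 0 x)) - Real.log (cellMass μ c n (c n x)) := by ring
  rw [← hgn]
  refine le_of_mul_le_mul_right ?_ hlog
  calc Real.log 2 * D * Real.log ε⁻¹ = Real.log 2 * (D * Real.log ε⁻¹) := by ring
    _ ≤ Real.log 2 * (m * (g n - g 0)) := by gcongr
    _ = m * Real.log 2 * (g n - g 0) := by ring
    _ ≤ θ * Real.log ε⁻¹ * (g n - g 0) :=
        mul_le_mul_of_nonneg_right hθ (sub_nonneg.2 (hg n.zero_le))
    _ = θ * (g n - g 0) * Real.log ε⁻¹ := by ring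

lemma ae_eventually_potential_le_cellMass [Countable ι] (hc : ∀ n x, p (c (n + 1) x) = c n x)
    (hfin : ∀ n b, μ (c n ⁻¹' {b}) ≠ ⊤) {children : ι → Finset ι}
    (mem_children : ∀ a b, b ∈ children a ↔ p b = a) {N : ℝ} (hN : 2 ≤ N)
    (card_children : ∀ a, ((children a).card : ℝ) = N) (H : ℕ → Set ι) (m : ℕ) {δ : ℝ}
    (hδ : 0 < δ) :
    ∀ᵐ x ∂μ, ∀ᶠ n : ℕ in atTop,
      (Real.exp (-δ) / N) ^ n * potential p H N m n (c n x) ≤ cellMass μ c n (c n x) := by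
  have hw : ∀ n b, 0 ≤ (Real.exp (-δ) / N) ^ n * potential p H N m n b := fun n b =>
    mul_nonneg (by positivity) (potential_nonneg p H m hN n b)
  refine ae_eventually_le_cellMass hc hfin mem_children hw fun a => ?_
  refine Summable.of_nonneg_of_le (fun n => Finset.sum_nonneg fun b _ => hw n b) (fun n => ?_)
    (summable_geometric_of_lt_one (Real.exp_pos _).le (Real.exp_lt_one_iff.2 (neg_lt_zero.2 hδ)))
  calc ∑ b ∈ descendants children n a, (Real.exp (-δ) / N) ^ n * potential p H N m n b
      ≤ (Real.exp (-δ) / N) ^ n * N ^ n := by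
        rw [← Finset.mul_sum]
        gcongr
        exact sum_descendants_potential_le p H m mem_children card_children hN n a
    _ = Real.exp (-δ) ^ n := by rw [← mul_pow, div_mul_cancel₀ _ (by positivity)]

lemma ae_eventually_sum_holeBelow_le [Countable ι] (hc : ∀ n x, p (c (n + 1) x) = c n x)
    (hfin : ∀ n b, μ (c n ⁻¹' {b}) ≠ ⊤) {children : ι → Finset ι}
    (mem_children : ∀ a b, b ∈ children a ↔ p b = a) {N : ℝ} (hN : 2 ≤ N)
    (card_children : ∀ a, ((children a).card : ℝ) = N) {m : ℕ} {δ ε θ : ℝ} (hδ : 0 < δ)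
    (hε : ε ∈ Ioo 0 1) (hθ : m * Real.log 2 ≤ θ * Real.log ε⁻¹) :
    ∀ᵐ x ∂μ, ∀ᶠ n : ℕ in atTop,
      N⁻¹ ^ m / 8 * ∑ i ∈ Finset.range n,
          holeBelow p (sparseCells μ c p ε m) m (i + 1) (c (i + 1) x) ≤
        n * (Real.log N + δ) + (1 - θ) * Real.log (cellMass μ c n (c n x)) +
          (θ * Real.log (cellMass μ c 0 (c 0 x)) + Real.log (4 / 3)) := by
  set H := sparseCells μ c p ε m
  filter_upwards [ae_cellMass_pos hfin,
    ae_eventually_potential_le_cellMass hc hfin mem_children hN card_children H m hδ] with x hpos hx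
  filter_upwards [hx] with n hn
  have hweight := weight_pos p H m (by linarith : 0 ≤ N) n (c n x)
  have hmass : n * (-δ - Real.log N) +
      (Real.log (weight p H N m n (c n x)) - Real.log (4 / 3)) ≤
        Real.log (cellMass μ c n (c n x)) :=
    calc _ = Real.log ((Real.exp (-δ) / N) ^ n * (3 / 4 * weight p H N m n (c n x))) := by
          rw [Real.log_mul (by positivity) (by positivity), Real.log_mul (by norm_num) hweight.ne',
            Real.log_pow, Real.log_div (Real.exp_ne_zero _) (by positivity), Real.log_exp,
            show (3 / 4 : ℝ) = (4 / 3)⁻¹ by norm_num, Real.log_inv]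
          ring
      _ ≤ _ := Real.log_le_log (by positivity) <| hn.trans' <| by
          gcongr
          exact three_quarters_mul_weight_le_potential p H m hN n (c n x)
  have hgain := le_log_weight H m (by linarith : 1 ≤ N) (v := fun n => c n x) (fun n => hc n x) n
  have hloss := log_two_mul_sum_holeBelow_zero_le hc hfin hε hθ hpos n
  linarith

end Cells

section DyadicGrid

variable {d : ℕ}

/-- The index of the dyadic cube containing, one level above, the dyadic cube of index `k`. -/
def parent (k : Fin d → ℤ) : Fin d → ℤ := fun i => k i / 2

/-- The indices of the `2 ^ d` dyadic cubes into which the dyadic cube of index `a` is divided. -/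
noncomputable def children (a : Fin d → ℤ) : Finset (Fin d → ℤ) :=
  Fintype.piFinset fun i => {2 * a i, 2 * a i + 1}

lemma mem_children (a b : Fin d → ℤ) : b ∈ children a ↔ parent b = a := by
  simp only [children, Fintype.mem_piFinset, Finset.mem_insert, Finset.mem_singleton, parent,
    funext_iff]
  exact forall_congr' fun i => by omega

lemma card_children (a : Fin d → ℤ) : ((children a).card : ℝ) = 2 ^ d := by
  have hpair : ∀ i, ({2 * a i, 2 * a i + 1} : Finset ℤ).card = 2 := fun i =>
    Finset.card_pair (by omega)
  simp [children, hpair]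

/-- The translation vector of the grid of type `t`: the coordinates in `t` are moved by `1 / 3`. -/
noncomputable def gridShift (t : Fin d → Bool) (i : Fin d) : ℝ := if t i then 1 / 3 else 0

/-- The index of the cube of side `2 ^ (-n)` of the grid of type `t` which contains `x`. The cubes
themselves are the fibres of `dyadicIndex t n`. -/
noncomputable def dyadicIndex (t : Fin d → Bool) (n : ℕ) (x : EuclideanSpace ℝ (Fin d)) :
    Fin d → ℤ :=
  fun i => ⌊2 ^ n * (x i - gridShift t i)⌋

lemma parent_dyadicIndex (t : Fin d → Bool) (n : ℕ) (x : EuclideanSpace ℝ (Fin d)) :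
    parent (dyadicIndex t (n + 1) x) = dyadicIndex t n x := by
  funext i
  rw [parent, dyadicIndex, dyadicIndex, show (2 : ℝ) ^ n * (x i - gridShift t i) =
    2 ^ (n + 1) * (x i - gridShift t i) / (2 : ℕ) by push_cast; ring, Int.floor_div_natCast]
  rfl

lemma dist_lt_of_forall_abs_sub_lt (hd : 0 < d) {x y : EuclideanSpace ℝ (Fin d)} {r : ℝ}
    (h : ∀ i, |x i - y i| < r) : dist x y < d * r := by
  have : Nonempty (Fin d) := ⟨⟨0, hd⟩⟩
  have hr : 0 < r := (abs_nonneg _).trans_lt (h ⟨0, hd⟩)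
  have hd' : (1 : ℝ) ≤ d := by exact_mod_cast hd
  rw [EuclideanSpace.dist_eq, Real.sqrt_lt' (by positivity)]
  calc ∑ i, dist (x i) (y i) ^ 2 < ∑ _i : Fin d, r ^ 2 :=
        Finset.sum_lt_sum_of_nonempty Finset.univ_nonempty fun i _ =>
          pow_lt_pow_left₀ (h i) (abs_nonneg _) two_ne_zero
    _ = d * r ^ 2 := by simp
    _ ≤ d ^ 2 * r ^ 2 := by gcongr; exact le_self_pow₀ hd' two_ne_zero
    _ = (d * r) ^ 2 := (mul_pow _ _ _).symm

lemma dyadicCube_subset_ball (hd : 0 < d) (t : Fin d → Bool) (n : ℕ)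
    (x : EuclideanSpace ℝ (Fin d)) :
    dyadicIndex t n ⁻¹' {dyadicIndex t n x} ⊆ ball x (d * (2 ^ n)⁻¹) := fun y hy =>
  dist_lt_of_forall_abs_sub_lt hd fun i => by
    have h := Int.abs_sub_lt_one_of_floor_eq_floor (congrFun (mem_singleton_iff.1 hy) i)
    rw [← mul_sub, sub_sub_sub_cancel_right, abs_mul, abs_of_pos (by positivity)] at h
    rwa [← one_div, lt_div_iff₀' (by positivity)]

lemma measure_dyadicCube_ne_top (hd : 0 < d) (μ : Measure (EuclideanSpace ℝ (Fin d)))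
    [IsLocallyFiniteMeasure μ] (t : Fin d → Bool) (n : ℕ) (b : Fin d → ℤ) :
    μ (dyadicIndex t n ⁻¹' {b}) ≠ ⊤ := by
  obtain hempty | ⟨x, rfl⟩ := (dyadicIndex t n ⁻¹' {b}).eq_empty_or_nonempty
  · simp [hempty]
  · exact ne_top_of_le_ne_top measure_ball_lt_top.ne
      (measure_mono (dyadicCube_subset_ball hd t n x))

lemma floor_eq_floor_of_abs_sub_lt {δ y z : ℝ} (hy : Int.fract y ∈ Icc δ (1 - δ))
    (h : |z - y| < δ) : ⌊z⌋ = ⌊y⌋ := by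
  have := Int.floor_add_fract y
  obtain ⟨h₁, h₂⟩ := abs_lt.1 h
  exact Int.floor_eq_iff.2 ⟨by linarith [hy.1], by linarith [hy.2]⟩

-- The two points differ by `2 ^ n / 3`, which is at distance `1 / 3` from the integers.
lemma fract_mem_Icc_or_fract_sub_third_mem_Icc (n : ℕ) (y : ℝ) :
    Int.fract (2 ^ n * y) ∈ Icc (1 / 8 : ℝ) (1 - 1 / 8) ∨
      Int.fract (2 ^ n * (y - 1 / 3)) ∈ Icc (1 / 8 : ℝ) (1 - 1 / 8) := by
  set Y := 2 ^ n * y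
  set Z := 2 ^ n * (y - 1 / 3)
  have hdiff : ((2 ^ n - 3 * (⌊Y⌋ - ⌊Z⌋) : ℤ) : ℝ) = 3 * (Int.fract Y - Int.fract Z) := by
    rw [Int.fract, Int.fract]
    push_cast
    ring
  have hne : (2 ^ n - 3 * (⌊Y⌋ - ⌊Z⌋) : ℤ) ≠ 0 := fun h =>
    absurd (Int.prime_three.dvd_of_dvd_pow ⟨_, sub_eq_zero.1 h⟩) (by norm_num)
  generalize (2 ^ n - 3 * (⌊Y⌋ - ⌊Z⌋) : ℤ) = K at hdiff hne
  by_contra! hnot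
  have hY := And.intro (Int.fract_nonneg Y) (Int.fract_lt_one Y)
  have hZ := And.intro (Int.fract_nonneg Z) (Int.fract_lt_one Z)
  have hK : -3 < K ∧ K < 3 := by
    rw [← Int.cast_lt (R := ℝ), ← Int.cast_lt (R := ℝ), hdiff]
    push_cast
    constructor <;> linarith
  simp only [mem_Icc, not_and_or, not_le] at hnot
  obtain rfl | rfl | rfl | rfl : K = -2 ∨ K = -1 ∨ K = 1 ∨ K = 2 := by omega
  all_goals
    push_cast at hdiff
    rcases hnot with ⟨hf | hf, hg | hg⟩ <;> linarith

lemma exists_ball_subset_dyadicCube (n : ℕ) (x : EuclideanSpace ℝ (Fin d)) :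
    ∃ t, ball x (2 ^ (n + 3))⁻¹ ⊆ dyadicIndex t n ⁻¹' {dyadicIndex t n x} := by
  have hcoord : ∀ i, ∃ b : Bool,
      Int.fract (2 ^ n * (x i - if b then 1 / 3 else 0)) ∈ Icc (1 / 8 : ℝ) (1 - 1 / 8) := fun i =>
    (fract_mem_Icc_or_fract_sub_third_mem_Icc n (x i)).elim (fun h => ⟨false, by simpa using h⟩)
      fun h => ⟨true, by simpa using h⟩
  choose t ht using hcoord
  refine ⟨t, fun y hy => funext fun i => floor_eq_floor_of_abs_sub_lt (ht i) ?_⟩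
  have hyx : |y i - x i| < (2 ^ (n + 3))⁻¹ :=
    (PiLp.norm_apply_le (y - x) i).trans_lt (by simpa [dist_eq_norm] using hy)
  rw [← mul_sub, gridShift, sub_sub_sub_cancel_right, abs_mul, abs_of_pos (by positivity)]
  calc 2 ^ n * |y i - x i| < 2 ^ n * (2 ^ (n + 3))⁻¹ := by gcongr
    _ = 1 / 8 := by rw [pow_add]; field_simp; norm_num

lemma exists_holeBelow_eq_one_of_lt_porMeas (hd : 0 < d) {μ : Measure (EuclideanSpace ℝ (Fin d))}
    [IsLocallyFiniteMeasure μ] {α ε : ℝ} (hα : 0 < α) (hε : 0 < ε) {m : ℕ}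
    (hm : 8 * d ≤ α * 2 ^ m) {n : ℕ} {x : EuclideanSpace ℝ (Fin d)}
    (hx : α < porMeas μ x (2 ^ (n + 3))⁻¹ ε) :
    ∃ t, holeBelow parent (sparseCells μ (dyadicIndex t) parent ε m) m n
      (dyadicIndex t n x) = 1 := by
  obtain ⟨t, ht⟩ := exists_ball_subset_dyadicCube n x
  set r : ℝ := (2 ^ (n + 3))⁻¹ with hr
  have hr₀ : 0 < r := by positivity
  obtain ⟨β, ⟨-, y, hyx, hμ⟩, hαβ⟩ := exists_lt_of_lt_csSup
    (by exact ⟨0, le_rfl, x, by simp, by simp⟩) hx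
  have hy : dyadicIndex t n y = dyadicIndex t n x :=
    ht (hyx (mem_ball_self (mul_pos (hα.trans hαβ) hr₀)))
  have hanc : parent^[m] (dyadicIndex t (n + m) y) = dyadicIndex t n x :=
    (iterate_parent_label (parent_dyadicIndex t) n m y).trans hy
  have hsmall : dyadicIndex t (n + m) ⁻¹' {dyadicIndex t (n + m) y} ⊆ ball y (β * r) := by
    refine (dyadicCube_subset_ball hd t (n + m) y).trans (ball_subset_ball ?_)
    calc d * ((2 : ℝ) ^ (n + m))⁻¹ = 8 * d / 2 ^ m * r := by
          rw [hr, pow_add, pow_add]; field_simp; norm_num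
      _ ≤ β * r := by
          gcongr
          exact ((div_le_iff₀ (by positivity)).2 hm).trans hαβ.le
  have hball := ENNReal.toReal_mono
    (ENNReal.mul_ne_top ENNReal.ofReal_ne_top measure_ball_lt_top.ne) hμ
  rw [ENNReal.toReal_mul, ENNReal.toReal_ofReal hε.le] at hball
  have hhole : dyadicIndex t (n + m) y ∈
      sparseCells μ (dyadicIndex t) parent ε m (n + m) := by
    refine ⟨Nat.le_add_left m n, ?_⟩
    rw [hanc, Nat.add_sub_cancel]
    calc cellMass μ (dyadicIndex t) (n + m) (dyadicIndex t (n + m) y)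
        ≤ μ.real (ball y (β * r)) := measureReal_mono hsmall measure_ball_lt_top.ne
      _ ≤ ε * μ.real (ball x r) := hball
      _ ≤ ε * cellMass μ (dyadicIndex t) n (dyadicIndex t n x) := by
          gcongr
          exact measureReal_mono ht (measure_dyadicCube_ne_top hd μ t n _)
  exact ⟨t, indicator_of_mem ((mem_image _ _ _).2 ⟨_, hhole, hanc⟩) 1⟩

end DyadicGrid

lemma card_filter_range_le_add_sum {P : ℕ → Prop} {v : ℕ → ℝ} (hv : ∀ i, 0 ≤ v i) (k n : ℕ)
    (h : ∀ i, P (i + k) → 1 ≤ v i) :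
    ((Finset.range n).filter P).card ≤ k + ∑ i ∈ Finset.range n, v i :=
  calc (((Finset.range n).filter P).card : ℝ)
      ≤ ((Finset.range (k + n)).filter P).card := by gcongr; omega
    _ = ∑ i ∈ Finset.range k, (if P i then 1 else 0) +
          ∑ i ∈ Finset.range n, if P (k + i) then 1 else 0 := by
        rw [← Finset.sum_boole, Finset.sum_range_add]
    _ ≤ ∑ i ∈ Finset.range k, 1 + ∑ i ∈ Finset.range n, v i := by
        gcongr with i _ i
        · split_ifs <;> norm_num
        · split_ifs with hi
          · exact h i (by rwa [add_comm])
          · exact hv i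
    _ = k + ∑ i ∈ Finset.range n, v i := by simp

section PorosityFrequency

variable {X : Type*} [MetricSpace X] [MeasurableSpace X] {μ : Measure X} {α ε ρ : ℝ} {x : X}

/-- The indices `i < n` of the scales `2 ^ (-i)` at which `por(μ, x, 2 ^ (-i), ε) > α`. -/
noncomputable def porousScales (μ : Measure X) (α ε : ℝ) (x : X) (n : ℕ) : Finset ℕ :=
  (Finset.range n).filter fun i => α < porMeas μ x (2 ^ i)⁻¹ ε

/-- The lower asymptotic proportion of the dyadic scales at which `μ` has, around `x`, an `ε`-hole
of relative size greater than `α`. -/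
noncomputable def lowerPorosityFrequency (μ : Measure X) (α ε : ℝ) (x : X) : ℝ :=
  liminf (fun n : ℕ => ((porousScales μ α ε x n).card : ℝ) / n) atTop

-- In `IsMeanPorous` the scales are integers, and `Finset.range n` is coerced to `Finset ℤ` by means
-- of the monad structure of `Finset`.
lemma _root_.IsMeanPorous.ae_le_lowerPorosityFrequency (hμ : IsMeanPorous μ α ρ) (hε : 0 < ε) :
    ∀ᵐ x ∂μ, ρ ≤ lowerPorosityFrequency μ α ε x := by
  have hcard : ∀ (P : ℤ → Prop) (n : ℕ),
      (Finset.filter P (do let i ← Finset.range n; pure (i : ℤ))).card =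
        ((Finset.range n).filter fun i : ℕ => P i).card := fun P n => by
    have himage : (do let i ← Finset.range n; pure (i : ℤ)) =
        (Finset.range n).image ((↑) : ℕ → ℤ) := by
      ext z
      simp [Finset.bind_def, eq_comm]
    rw [himage, Finset.filter_image, Finset.card_image_of_injective _ Nat.cast_injective]
  filter_upwards [hμ ε hε] with x hx
  simpa only [lowerPorosityFrequency, porousScales, hcard, zpow_neg, zpow_natCast] using hx

lemma eventually_mul_le_card_porousScales (h : ρ < lowerPorosityFrequency μ α ε x) :
    ∀ᶠ n : ℕ in atTop, ρ * n ≤ (porousScales μ α ε x n).card := by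
  have hbdd : IsBoundedUnder (· ≥ ·) atTop
      fun n : ℕ => ((porousScales μ α ε x n).card : ℝ) / n :=
    isBoundedUnder_of ⟨0, fun n => by positivity⟩
  filter_upwards [eventually_lt_of_lt_liminf h hbdd, eventually_gt_atTop 0] with n hn hn₀
  exact ((lt_div_iff₀ (Nat.cast_pos.2 hn₀)).1 hn).le

end PorosityFrequency

lemma le_two_pow_ceil_logb {t : ℝ} (ht : 0 < t) : t ≤ 2 ^ ⌈Real.logb 2 t⌉₊ := by
  rw [← Real.rpow_natCast, ← Real.logb_le_iff_le_rpow one_lt_two ht]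
  exact Nat.le_ceil _

lemma ceil_logb_mul_log_le {t : ℝ} (ht : 1 ≤ t) :
    ⌈Real.logb 2 t⌉₊ * Real.log 2 ≤ Real.log (2 * t) := by
  have hceil := (Nat.ceil_lt_add_one (Real.logb_nonneg one_lt_two ht)).le
  rwa [← Real.log_div_log, div_add_one (Real.log_pos one_lt_two).ne',
    le_div_iff₀ (Real.log_pos one_lt_two), add_comm, ← Real.log_mul two_ne_zero (by positivity)]
    at hceil

section LocalDimension

variable {X : Type*} [MetricSpace X] [MeasurableSpace X] {μ : Measure X} [IsLocallyFiniteMeasure μ]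
  {x : X} {K s : ℝ}

lemma eventually_log_measureReal_ball_div_log_le (hx : x ∈ μ.support) (hK : 0 < K) (hs : 0 ≤ s)
    (h : ∀ᶠ n : ℕ in atTop, -Real.log (μ.real (ball x (K * (2 ^ n)⁻¹))) ≤ n * (s * Real.log 2)) :
    ∀ᶠ r in 𝓝[>] 0, Real.log (μ.real (ball x r)) / Real.log r ≤
      s - s * Real.log (2 * K) / Real.log r := by
  have hscale : Tendsto (fun r => ⌈Real.logb 2 (K * r⁻¹)⌉₊) (𝓝[>] 0) atTop :=
    tendsto_nat_ceil_atTop.comp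
      ((Real.tendsto_logb_atTop one_lt_two).comp (tendsto_inv_nhdsGT_zero.const_mul_atTop hK))
  obtain ⟨R, hR, hfin⟩ : ∃ R > 0, μ (ball x R) ≠ ⊤ := by
    obtain ⟨U, hU, hμU⟩ := μ.finiteAt_nhds x
    obtain ⟨R, hR, hRU⟩ := Metric.mem_nhds_iff.1 hU
    exact ⟨R, hR, ((measure_mono hRU).trans_lt hμU).ne⟩
  filter_upwards [hscale.eventually h, Ioo_mem_nhdsGT (lt_min one_pos (lt_min hK hR))]
    with r hr ⟨hr₀, hr₁⟩
  obtain ⟨hr₁, hrK, hrR⟩ : r < 1 ∧ r < K ∧ r < R := by simpa only [lt_min_iff] using hr₁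
  set n := ⌈Real.logb 2 (K * r⁻¹)⌉₊
  have hKr : 1 ≤ K * r⁻¹ := by rw [← div_eq_mul_inv, one_le_div hr₀]; exact hrK.le
  have hn : n * Real.log 2 ≤ Real.log (2 * K) - Real.log r := by
    rw [sub_eq_add_neg, ← Real.log_inv, ← Real.log_mul (by positivity) (by positivity), mul_assoc]
    exact ceil_logb_mul_log_le hKr
  have hball : ball x (K * (2 ^ n)⁻¹) ⊆ ball x r := by
    refine ball_subset_ball ?_
    rw [← div_eq_mul_inv, div_le_iff₀ (by positivity), ← div_le_iff₀' hr₀, div_eq_mul_inv]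
    exact le_two_pow_ceil_logb (by positivity)
  have hpos : 0 < μ.real (ball x (K * (2 ^ n)⁻¹)) :=
    ENNReal.toReal_pos
      ((Measure.mem_support_iff_forall x).1 hx _ (ball_mem_nhds x (by positivity))).ne'
      (ne_top_of_le_ne_top hfin (measure_mono (hball.trans (ball_subset_ball hrR.le))))
  have hmono : Real.log (μ.real (ball x (K * (2 ^ n)⁻¹))) ≤ Real.log (μ.real (ball x r)) :=
    Real.log_le_log hpos (measureReal_mono hball
      (ne_top_of_le_ne_top hfin (measure_mono (ball_subset_ball hrR.le))))
  have hlog : Real.log r < 0 := Real.log_neg hr₀ hr₁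
  rw [div_le_iff_of_neg hlog, sub_mul, div_mul_cancel₀ _ hlog.ne]
  linarith [mul_le_mul_of_nonneg_left hn hs]

lemma upperLocalDim_le_of_eventually (hx : x ∈ μ.support) (hK : 0 < K) (hs : 0 ≤ s)
    (h : ∀ᶠ n : ℕ in atTop, -Real.log (μ.real (ball x (K * (2 ^ n)⁻¹))) ≤ n * (s * Real.log 2)) :
    upperLocalDim μ x ≤ s := by
  have hlim : Tendsto (fun r => s - s * Real.log (2 * K) / Real.log r) (𝓝[>] 0) (𝓝 s) := by
    simpa using tendsto_const_nhds.sub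
      (tendsto_const_nhds.div_atBot Real.tendsto_log_nhdsGT_zero)
  refine (limsup_le_limsup ?_).trans_eq
    ((continuous_coe_real_ereal.tendsto s).comp hlim).limsup_eq
  filter_upwards [eventually_log_measureReal_ball_div_log_le hx hK hs h] with r hr
    using EReal.coe_le_coe_iff.2 hr

end LocalDimension

section Euclidean

variable {d m : ℕ} {α ε δ θ ρ : ℝ}

lemma card_porousScales_le_add_sum (hd : 0 < d) {μ : Measure (EuclideanSpace ℝ (Fin d))}
    [IsLocallyFiniteMeasure μ] (hα : 0 < α) (hε : 0 < ε) (hm : 8 * d ≤ α * 2 ^ m) (n : ℕ)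
    (x : EuclideanSpace ℝ (Fin d)) :
    (porousScales μ α ε x n).card ≤ 4 + ∑ i ∈ Finset.range n, ∑ t,
      holeBelow parent (sparseCells μ (dyadicIndex t) parent ε m) m (i + 1)
        (dyadicIndex t (i + 1) x) := by
  set hole : (Fin d → Bool) → ℕ → ℝ := fun t i =>
    holeBelow parent (sparseCells μ (dyadicIndex t) parent ε m) m (i + 1) (dyadicIndex t (i + 1) x)
  have hnonneg : ∀ t i, 0 ≤ hole t i := fun t i => holeBelow_nonneg ..
  refine card_filter_range_le_add_sum (fun i => Finset.sum_nonneg fun t _ => hnonneg t i) 4 n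
    fun i hi => ?_
  obtain ⟨t, ht⟩ := exists_holeBelow_eq_one_of_lt_porMeas (n := i + 1) hd hα hε hm hi
  exact ht.symm.trans_le
    (Finset.single_le_sum (fun t _ => hnonneg t i) (Finset.mem_univ t))

lemma ae_exists_eventually_card_porousScales_le (hd : 0 < d)
    (μ : Measure (EuclideanSpace ℝ (Fin d))) [IsLocallyFiniteMeasure μ] (hα : 0 < α)
    (hm : 8 * d ≤ α * 2 ^ m) (hδ : 0 < δ) (hε : ε ∈ Ioo 0 1)
    (hθ : m * Real.log 2 ≤ θ * Real.log ε⁻¹) (hθ₁ : θ ≤ 1) :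
    ∀ᵐ x ∂μ, ∃ B, ∀ᶠ n : ℕ in atTop,
      (2 ^ d : ℝ)⁻¹ ^ (m + 1) / 8 * (porousScales μ α ε x n).card ≤
        n * (d * Real.log 2 + δ) + (1 - θ) * Real.log (μ.real (ball x (d * (2 ^ n)⁻¹))) + B := by
  have hN : (2 : ℝ) ≤ 2 ^ d := le_self_pow₀ one_le_two hd.ne'
  have hgrid := fun t => ae_eventually_sum_holeBelow_le (parent_dyadicIndex t)
    (measure_dyadicCube_ne_top hd μ t) mem_children hN card_children hδ hε hθ
  have hpos := fun t => ae_cellMass_pos (measure_dyadicCube_ne_top hd μ t)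
  filter_upwards [ae_all_iff.2 hgrid, ae_all_iff.2 hpos] with x hx hcell
  set hole : (Fin d → Bool) → ℕ → ℝ := fun t i =>
    holeBelow parent (sparseCells μ (dyadicIndex t) parent ε m) m (i + 1) (dyadicIndex t (i + 1) x)
  set b : (Fin d → Bool) → ℝ := fun t =>
    θ * Real.log (cellMass μ (dyadicIndex t) 0 (dyadicIndex t 0 x)) + Real.log (4 / 3)
  refine ⟨(2 ^ d)⁻¹ * ((2 ^ d : ℝ)⁻¹ ^ m / 2 + ∑ t, b t), ?_⟩
  filter_upwards [eventually_all.2 hx] with n hn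
  set κ := (2 ^ d : ℝ)⁻¹ ^ m
  set S := n * (d * Real.log 2 + δ) + (1 - θ) * Real.log (μ.real (ball x (d * (2 ^ n)⁻¹)))
  have hsum : ∀ t, κ / 8 * ∑ i ∈ Finset.range n, hole t i ≤ S + b t := fun t => by
    refine (hn t).trans ?_
    rw [Real.log_pow]
    gcongr ?_ + b t
    refine add_le_add_right (mul_le_mul_of_nonneg_left ?_ (sub_nonneg.2 hθ₁)) _
    exact Real.log_le_log (hcell t n)
      (measureReal_mono (dyadicCube_subset_ball hd t n x) measure_ball_lt_top.ne)
  calc (2 ^ d : ℝ)⁻¹ ^ (m + 1) / 8 * (porousScales μ α ε x n).card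
      ≤ (2 ^ d : ℝ)⁻¹ ^ (m + 1) / 8 *
          (4 + ∑ i ∈ Finset.range n, ∑ t, hole t i) := by
        gcongr
        exact card_porousScales_le_add_sum hd hα hε.1 hm n x
    _ = (2 ^ d)⁻¹ * (κ / 2 + ∑ t, κ / 8 * ∑ i ∈ Finset.range n, hole t i) := by
        rw [Finset.sum_comm, ← Finset.mul_sum, pow_succ]; ring
    _ ≤ (2 ^ d)⁻¹ * (κ / 2 + ∑ t, (S + b t)) := by gcongr with t; exact hsum t
    _ = S + (2 ^ d)⁻¹ * (κ / 2 + ∑ t, b t) := by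
        rw [Finset.sum_add_distrib]
        simp only [Finset.sum_const, Finset.card_univ, Fintype.card_pi, Fintype.card_bool,
          Finset.prod_const, Fintype.card_fin, nsmul_eq_mul, Nat.cast_pow, Nat.cast_ofNat]
        field_simp
        ring

lemma eventually_le_mul_sub {L γ B : ℝ} (hγ : 0 < γ) (hθ : θ ∈ Ioo 0 1) (hθL : θ * L ≤ γ)
    {y : ℕ → ℝ} (h : ∀ᶠ n : ℕ in atTop, (1 - θ) * y n ≤ n * (L - 3 * γ) + B) :
    ∀ᶠ n : ℕ in atTop, y n ≤ n * (L - γ) := by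
  have hB := (tendsto_natCast_atTop_atTop (R := ℝ)).eventually_ge_atTop (B / γ)
  filter_upwards [h, hB] with n hn hnB
  rw [div_le_iff₀ hγ] at hnB
  refine le_of_mul_le_mul_left ?_ (sub_pos.2 hθ.2)
  calc (1 - θ) * y n ≤ n * (L - 3 * γ) + B := hn
    _ ≤ n * (L - γ - γ) := by linarith
    _ ≤ n * (L - γ - θ * (L - γ)) := by
        gcongr
        linarith [mul_pos hθ.1 hγ]
    _ = (1 - θ) * (n * (L - γ)) := by ring

lemma pow_mul_div_mem_Ioc (hρ : ρ ∈ Ioc 0 1) :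
    (2 ^ d : ℝ)⁻¹ ^ (m + 1) * ρ / 64 ∈ Ioc 0 (1 / 64) := by
  have hκ : (2 ^ d : ℝ)⁻¹ ^ (m + 1) ≤ 1 :=
    pow_le_one₀ (by positivity) (inv_le_one_of_one_le₀ (one_le_pow₀ one_le_two))
  have := hρ.1
  refine ⟨by positivity, ?_⟩
  gcongr
  exact mul_le_one₀ hκ hρ.1.le hρ.2

lemma ae_upperLocalDim_le_of_le_lowerPorosityFrequency (hd : 0 < d)
    (μ : Measure (EuclideanSpace ℝ (Fin d))) [IsLocallyFiniteMeasure μ] (hα : 0 < α)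
    (hρ : ρ ∈ Ioc 0 1) (hm : 8 * d ≤ α * 2 ^ m) (hε : ε ∈ Ioo 0 1) (hθ : θ ∈ Ioo 0 1)
    (hθε : m * Real.log 2 ≤ θ * Real.log ε⁻¹)
    (hθd : θ * (d * Real.log 2) ≤ (2 ^ d : ℝ)⁻¹ ^ (m + 1) * ρ / 64) :
    ∀ᵐ x ∂μ, ρ ≤ lowerPorosityFrequency μ α ε x →
      upperLocalDim μ x ≤ ((d - (2 ^ d : ℝ)⁻¹ ^ (m + 1) * ρ / 64 : ℝ) : EReal) := by
  obtain ⟨hγ₀, hγ₁⟩ := pow_mul_div_mem_Ioc (d := d) (m := m) hρ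
  set γ := (2 ^ d : ℝ)⁻¹ ^ (m + 1) * ρ / 64 with hγ
  have hd' : (1 : ℝ) ≤ d := by exact_mod_cast hd
  filter_upwards [Measure.support_mem_ae,
    ae_exists_eventually_card_porousScales_le hd μ hα hm hγ₀ hε hθε hθ.2.le]
    with x hx ⟨B, hB⟩ hfreq
  have hmass : ∀ᶠ n : ℕ in atTop, -Real.log (μ.real (ball x (d * (2 ^ n)⁻¹))) ≤
      n * (d * Real.log 2 - γ) := by
    refine eventually_le_mul_sub (B := B) hγ₀ hθ hθd ?_
    filter_upwards [hB,
      eventually_mul_le_card_porousScales ((half_lt_self hρ.1).trans_le hfreq)] with n hn hcard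
    have hgain : n * (4 * γ) ≤ (2 ^ d : ℝ)⁻¹ ^ (m + 1) / 8 * (porousScales μ α ε x n).card :=
      calc n * (4 * γ) = (2 ^ d : ℝ)⁻¹ ^ (m + 1) / 8 * (ρ / 2 * n) := by rw [hγ]; ring
        _ ≤ _ := by gcongr
    linarith
  refine upperLocalDim_le_of_eventually hx (by positivity : (0 : ℝ) < d) (by linarith) ?_
  filter_upwards [hmass] with n hn
  refine hn.trans ?_
  gcongr
  nlinarith [Real.log_two_lt_d9]

lemma exists_forall_ae_upperLocalDim_le (hd : 0 < d) (hα : 0 < α) (hρ : ρ ∈ Ioc 0 1)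
    (hm : 8 * d ≤ α * 2 ^ m) :
    ∃ ε > 0, ∀ μ : Measure (EuclideanSpace ℝ (Fin d)), IsLocallyFiniteMeasure μ → ∀ᵐ x ∂μ,
      ρ ≤ lowerPorosityFrequency μ α ε x →
        upperLocalDim μ x ≤ ((d - (2 ^ d : ℝ)⁻¹ ^ (m + 1) * ρ / 64 : ℝ) : EReal) := by
  have hd' : (1 : ℝ) ≤ d := by exact_mod_cast hd
  obtain ⟨hγ₀, hγ₁⟩ := pow_mul_div_mem_Ioc (d := d) (m := m) hρ
  set γ := (2 ^ d : ℝ)⁻¹ ^ (m + 1) * ρ / 64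
  have hθ : γ / d ∈ Ioo 0 1 :=
    ⟨by positivity, (div_lt_one (by positivity)).2 (by linarith)⟩
  have hε : Real.exp (-((m + 1) / (γ / d))) ∈ Ioo 0 1 :=
    ⟨Real.exp_pos _, Real.exp_lt_one_iff.2 (neg_lt_zero.2 (div_pos (by positivity) hθ.1))⟩
  refine ⟨_, hε.1, fun μ _ =>
    ae_upperLocalDim_le_of_le_lowerPorosityFrequency hd μ hα hρ hm hε hθ ?_ ?_⟩
  · rw [← Real.exp_neg, neg_neg, Real.log_exp, mul_div_cancel₀ _ hθ.1.ne']
    nlinarith [Real.log_two_lt_d9, m.cast_nonneg (α := ℝ)]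
  · rw [← mul_assoc, div_mul_cancel₀ _ (by positivity)]
    exact mul_le_of_le_one_right hγ₀.le (by linarith [Real.log_two_lt_d9])

end Euclidean

end MeanPorosity

open MeanPorosity in
theorem stmt6_general (d : ℕ) (hd : 0 < d) :
    ∃ C : ℝ, 0 < C ∧ ∀ α ρ : ℝ, α ∈ Ioc 0 1 → ρ ∈ Ioc 0 1 → ∃ ε > 0,
      ∀ μ : Measure (EuclideanSpace ℝ (Fin d)), IsLocallyFiniteMeasure μ →
        ∀ᵐ x ∂μ, ρ ≤ lowerPorosityFrequency μ α ε x →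
          upperLocalDim μ x ≤ ((d - C * ρ * α ^ d : ℝ) : EReal) := by
  have hd' : (1 : ℝ) ≤ d := by exact_mod_cast hd
  refine ⟨(1 / (32 * d)) ^ d / 64, by positivity, fun α ρ hα hρ => ?_⟩
  have hα₀ := hα.1
  obtain ⟨k, hk, hk'⟩ := exists_nat_pow_near (x := 8 * d / α) (y := (2 : ℝ))
    ((one_le_div hα₀).2 (by linarith [hα.2])) one_lt_two
  obtain ⟨ε, hε, h⟩ := exists_forall_ae_upperLocalDim_le hd hα₀ hρ (m := k + 1)
    (by rw [← div_le_iff₀' hα₀]; exact hk'.le)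
  refine ⟨ε, hε, fun μ hμ => ?_⟩
  have hgain : (α / (32 * d)) ^ d ≤ (2 ^ d : ℝ)⁻¹ ^ (k + 1 + 1) := by
    rw [← inv_pow, pow_right_comm]
    gcongr
    rw [inv_pow, ← inv_div]
    gcongr
    rw [pow_succ, pow_succ, le_div_iff₀ hα₀]
    linarith [(le_div_iff₀ hα₀).1 hk]
  filter_upwards [h μ hμ] with x hx hfreq
  refine (hx hfreq).trans (EReal.coe_le_coe_iff.2 (sub_le_sub_left ?_ _))
  calc (1 / (32 * d)) ^ d / 64 * ρ * α ^ d = (α / (32 * d)) ^ d * ρ / 64 := by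
        rw [div_pow, div_pow]; ring
    _ ≤ _ := by
        have := hρ.1
        gcongr

/-- (Sharp small-porosity bound.) For every `d` there is a constant
`C_d > 0` such that every mean `(α,ρ)`-porous Borel probability measure on `ℝ^d`
(with `α ∈ (0,1/2]`, `ρ ∈ (0,1]`) has upper packing dimension at most `d − C_d·ρ·α^d`. -/
theorem stmt6 (d : ℕ) (hd : 0 < d) :
    ∃ C : ℝ, 0 < C ∧ ∀ α ρ : ℝ, α ∈ Set.Ioc (0 : ℝ) (1 / 2) → ρ ∈ Set.Ioc (0 : ℝ) 1 →
      ∀ μ : Measure (EuclideanSpace ℝ (Fin d)), IsProbabilityMeasure μ →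
        IsMeanPorous μ α ρ →
          upperPackingDim μ ≤ (((d : ℝ) - C * ρ * α ^ d : ℝ) : EReal) := by
  obtain ⟨C, hC, h⟩ := stmt6_general d hd
  refine ⟨C, hC, fun α ρ hα hρ μ _ hμ => essSup_le_of_ae_le _ ?_⟩
  obtain ⟨ε, hε, hdim⟩ := h α ρ ⟨hα.1, hα.2.trans (by norm_num)⟩ hρ
  filter_upwards [hdim μ inferInstance, hμ.ae_le_lowerPorosityFrequency hε] with x hx hfreq
    using hx hfreq
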